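/- Let p be a prime and G a non-abelian finite p-group of order p^n with derived subgroup of order p^k and minimal number of generators d. Then |M(G)| ≤ p^{(1/2)(d-1)(n+k) − (d−2)}. -/

import Mathlib

/-- The Schur multiplier of a group `G`: the second cohomology group `H²(G, ℂˣ)`
of `G` with coefficients in `ℂˣ` (with trivial `G`-action), as in the paper. -/
noncomputable def schurMultiplier (G : Type) [Group G] : Type :=
  groupCohomology (Rep.trivial ℤ G (Additive ℂˣ)) 2

namespace SchurAux

open scoped commutatorElement

/-- Multiplicative 2-cocycles. -/
def Z2 (G : Type) [Group G] : Subgroup (G → G → ℂˣ) where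
  carrier := {f | ∀ x y z, f x y * f (x * y) z = f y z * f x (y * z)}
  one_mem' := by intro x y z; simp
  mul_mem' := by
    intro f g hf hg x y z
    simp only [Pi.mul_apply]
    rw [mul_mul_mul_comm, hf, hg, mul_mul_mul_comm]
  inv_mem' := by
    intro f hf x y z
    simp only [Pi.inv_apply]
    rw [← mul_inv, hf, mul_inv]

/-- The coboundary of a 1-cochain. -/
def del {G : Type} [Group G] : (G → ℂˣ) →* (G → G → ℂˣ) where
  toFun h := fun x y => h x * h y / h (x * y)
  map_one' := by funext x y; simp
  map_mul' := by
    intro a b; funext x y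
    simp only [Pi.mul_apply]
    rw [mul_mul_mul_comm, mul_div_mul_comm]

theorem del_apply {G : Type} [Group G] (h : G → ℂˣ) (x y : G) :
    del h x y = h x * h y / h (x * y) := rfl

theorem del_mem {G : Type} [Group G] (h : G → ℂˣ) : del h ∈ Z2 G := by
  intro x y z
  simp only [del_apply, mul_assoc]
  simp only [div_eq_mul_inv]
  have := mul_inv_cancel (h (x * y))
  have := mul_inv_cancel (h (y * z))
  calc _ = h x * h y * h z * (h (x * (y * z)))⁻¹ * (h (x * y) * (h (x * y))⁻¹) := by
          simp only [mul_comm, mul_left_comm, mul_assoc]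
    _ = h x * h y * h z * (h (x * (y * z)))⁻¹ * (h (y * z) * (h (y * z))⁻¹) := by simp
    _ = _ := by simp only [mul_comm, mul_left_comm, mul_assoc]

/-- Coboundaries inside cocycles. -/
def B2 (G : Type) [Group G] : Subgroup (Z2 G) := (del (G := G)).range.subgroupOf (Z2 G)

theorem mem_B2 {G : Type} [Group G] (f : Z2 G) : f ∈ B2 G ↔ ∃ h, del h = f.1 := by
  rw [B2, Subgroup.mem_subgroupOf]; rfl

/-- Concrete Schur multiplier. -/
abbrev M (G : Type) [Group G] : Type := Z2 G ⧸ B2 G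

open groupCohomology in
theorem card_eq (G : Type) [Group G] : Nat.card (schurMultiplier G) = Nat.card (M G) := by
  let A := Rep.trivial ℤ G (Additive ℂˣ)
  have hcoc : ∀ f : Z2 G, (fun q : G × G => Additive.ofMul (f.1 q.1 q.2)) ∈ cocycles₂ A := by
    intro f
    rw [mem_cocycles₂_iff]
    intro x y z
    have := f.2 x y z
    change Additive.ofMul (f.1 (x * y) z * f.1 x y) = Additive.ofMul (f.1 y z * f.1 x (y * z))
    rw [← this, mul_comm]
  let F : Z2 G → schurMultiplier G := fun f => H2π A ⟨_, hcoc f⟩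
  have hF : ∀ f g : Z2 G, F f = F g ↔ f⁻¹ * g ∈ B2 G := by
    intro f g
    change H2π A _ = H2π A _ ↔ _
    rw [H2π_eq_iff, mem_B2]
    constructor
    · rintro ⟨h', hh⟩
      let h : G → Additive ℂˣ := h'
      refine ⟨fun x => (Additive.toMul (h x))⁻¹, ?_⟩
      funext x y
      have : (h y - h (x * y) + h x : Additive ℂˣ) =
        Additive.ofMul (f.1 x y) - Additive.ofMul (g.1 x y) := congrFun hh (x, y)
      replace this := congrArg Additive.toMul this
      change (Additive.toMul (h y) / Additive.toMul (h (x * y))) * Additive.toMul (h x)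
        = f.1 x y / g.1 x y at this
      change (Additive.toMul (h x))⁻¹ * (Additive.toMul (h y))⁻¹ / (Additive.toMul (h (x*y)))⁻¹
        = (f.1 x y)⁻¹ * g.1 x y
      have h2 : (f.1 x y)⁻¹ * g.1 x y = (f.1 x y / g.1 x y)⁻¹ := by
        rw [inv_div, div_eq_mul_inv, mul_comm]
      rw [h2, ← this]
      simp only [div_eq_mul_inv, mul_inv, inv_inv, mul_comm, mul_left_comm]
    · rintro ⟨h, hh⟩
      refine ⟨(fun x => Additive.ofMul ((h x)⁻¹) : G → Additive ℂˣ), ?_⟩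
      funext ⟨x, y⟩
      have := congrFun (congrFun hh x) y
      change h x * h y / h (x * y) = (f.1 x y)⁻¹ * g.1 x y at this
      apply (Additive.toMul (α := ℂˣ)).injective
      change ((h y)⁻¹ / (h (x * y))⁻¹) * (h x)⁻¹ = f.1 x y / g.1 x y
      have h2 : f.1 x y / g.1 x y = ((f.1 x y)⁻¹ * g.1 x y)⁻¹ := by
        rw [mul_inv, inv_inv, div_eq_mul_inv]
      rw [h2, ← this]
      simp only [div_eq_mul_inv, mul_inv, inv_inv, mul_comm, mul_left_comm]
  symm
  refine Nat.card_congr (Equiv.ofBijective (Quotient.lift F ?_) ⟨?_, ?_⟩)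
  · intro a b h
    exact (hF a b).2 (QuotientGroup.leftRel_apply.1 h)
  · rintro ⟨a⟩ ⟨b⟩ h
    exact Quotient.sound (QuotientGroup.leftRel_apply.2 ((hF a b).1 h))
  · intro y
    induction y using H2_induction_on with
    | h x =>
      refine ⟨QuotientGroup.mk ⟨fun a b => Additive.toMul (α := ℂˣ) (x.1 (a, b)), ?_⟩, rfl⟩
      intro a b c
      let X : G × G → Additive ℂˣ := x.1
      have : (X (a * b, c) + X (a, b) : Additive ℂˣ) = X (b, c) + X (a, b * c) :=
        (mem_cocycles₂_iff x.1).1 x.2 a b c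
      replace this := congrArg Additive.toMul this
      change Additive.toMul (X (a, b)) * Additive.toMul (X (a * b, c)) =
        Additive.toMul (X (b, c)) * Additive.toMul (X (a, b * c))
      rw [mul_comm]
      exact this

section coc
set_option linter.unusedSectionVars false
variable {G : Type} [Group G]

theorem one_left {f : G → G → ℂˣ} (hf : f ∈ Z2 G) (g : G) : f 1 g = f 1 1 := by
  have := hf 1 1 g
  simp only [one_mul] at this
  exact (mul_right_cancel this).symm

theorem one_right {f : G → G → ℂˣ} (hf : f ∈ Z2 G) (g : G) : f g 1 = f 1 1 := by
  have := hf g 1 1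
  simp only [mul_one] at this
  exact mul_right_cancel this

/-- The commutator pairing. -/
def theta (f : G → G → ℂˣ) (x z : G) : ℂˣ := f x z / f z x

theorem theta_mul_left {f : G → G → ℂˣ} (hf : f ∈ Z2 G) {x y z : G}
    (hx : x * z = z * x) (hy : y * z = z * y) :
    theta f (x * y) z = theta f x z * theta f y z := by
  have h1 := hf x y z
  have h2 := hf z x y
  have h3 := hf x z y
  rw [hy] at h1
  rw [hx] at h3
  have e1 : f (x * y) z = (f x y)⁻¹ * (f y z * f x (z * y)) := by rw [← h1]; simp
  have e2 : f z (x * y) = (f x y)⁻¹ * (f z x * f (z * x) y) := by rw [h2]; simp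
  have e3 : f (z * x) y = (f x z)⁻¹ * (f z y * f x (z * y)) := by rw [← h3]; simp
  simp only [theta]
  rw [e1, e2, e3, div_mul_div_comm, div_eq_div_iff_mul_eq_mul]
  have := inv_mul_cancel (f x z)
  calc _ = (f x y)⁻¹ * f y z * f x (z * y) * f z x * f z y := by
          simp only [mul_comm, mul_left_comm, mul_assoc]
    _ = (f x y)⁻¹ * f y z * f x (z * y) * f z x * f z y * ((f x z)⁻¹ * f x z) := by simp
    _ = _ := by simp only [mul_comm, mul_left_comm, mul_assoc]

theorem theta_swap (f : G → G → ℂˣ) (x z : G) : theta f z x = (theta f x z)⁻¹ := by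
  simp [theta]

theorem theta_mul_right {f : G → G → ℂˣ} (hf : f ∈ Z2 G) {x y z : G}
    (hx : x * z = z * x) (hy : y * z = z * y) :
    theta f z (x * y) = theta f z x * theta f z y := by
  rw [theta_swap, theta_mul_left hf hx hy, mul_inv, theta_swap f x, theta_swap f y]

theorem theta_mul (f g : G → G → ℂˣ) (x z : G) : theta (f * g) x z = theta f x z * theta g x z := by
  simp [theta, mul_div_mul_comm]

theorem theta_del (h : G → ℂˣ) {x z : G} (hx : x * z = z * x) : theta (del h) x z = 1 := by
  simp [theta, del_apply, hx, mul_comm (h x)]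

/-- `theta` in the first variable as a homomorphism, on the centralizer. -/
def thetaHom (f : Z2 G) (z : G) : Subgroup.centralizer {z} →* ℂˣ :=
  MonoidHom.mk' (fun x => theta f.1 x.1 z) (by
    intro a b
    exact theta_mul_left f.2 (Subgroup.mem_centralizer_singleton_iff.1 a.2)
      (Subgroup.mem_centralizer_singleton_iff.1 b.2))

/-- `theta` in the first variable as a homomorphism, for central `z`. -/
def thetaC (f : Z2 G) (z : G) (hz : z ∈ Subgroup.center G) : G →* ℂˣ :=
  MonoidHom.mk' (fun x => theta f.1 x z) (by
    intro a b
    exact theta_mul_left f.2 (Subgroup.mem_center_iff.1 hz a) (Subgroup.mem_center_iff.1 hz b))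

theorem theta_comm (f : Z2 G) {x y z : G} (hx : x * z = z * x) (hy : y * z = z * y) :
    theta f.1 ⁅x, y⁆ z = 1 := by
  have hx' := Subgroup.mem_centralizer_singleton_iff.2 hx
  have hy' := Subgroup.mem_centralizer_singleton_iff.2 hy
  have : thetaHom f z ⁅(⟨x, hx'⟩ : Subgroup.centralizer {z}), ⟨y, hy'⟩⁆ = 1 := by
    rw [map_commutatorElement, commutatorElement_eq_one_iff_mul_comm, mul_comm]
  exact this

theorem theta_pow_left (f : Z2 G) {x z : G} (hx : x * z = z * x) (n : ℕ) :
    theta f.1 (x ^ n) z = theta f.1 x z ^ n := by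
  have hx' := Subgroup.mem_centralizer_singleton_iff.2 hx
  exact map_pow (thetaHom f z) ⟨x, hx'⟩ n

theorem theta_one_left (f : Z2 G) (z : G) : theta f.1 1 z = 1 := map_one (thetaHom f z)

theorem theta_pow_right (f : Z2 G) {x z : G} (hx : x * z = z * x) (n : ℕ) :
    theta f.1 x (z ^ n) = theta f.1 x z ^ n := by
  rw [theta_swap, theta_pow_left f hx.symm, theta_swap f.1 x z, inv_pow, inv_inv]

theorem theta_one_right (f : Z2 G) (z : G) : theta f.1 z 1 = 1 := by
  rw [theta_swap, theta_one_left, inv_one]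
end coc

/-! Symmetric cocycles on abelian groups are coboundaries. -/
section symm

/-- extension -/
@[ext] structure Ext {A : Type} [CommGroup A] (f : Z2 A) where
  /-- scalar part -/
  s : ℂˣ
  /-- group part -/
  g : A

variable {A : Type} [CommGroup A]

/-- The group structure on the extension. -/
@[reducible] noncomputable def extGroup (f : Z2 A) (hs : ∀ x y, f.1 x y = f.1 y x) : CommGroup (Ext f) where
  mul a b := ⟨a.s * b.s * f.1 a.g b.g, a.g * b.g⟩
  mul_assoc a b c := by
    apply Ext.ext
    · change a.s * b.s * f.1 a.g b.g * c.s * f.1 (a.g * b.g) c.g =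
        a.s * (b.s * c.s * f.1 b.g c.g) * f.1 a.g (b.g * c.g)
      have := f.2 a.g b.g c.g
      calc _ = a.s * b.s * c.s * (f.1 a.g b.g * f.1 (a.g * b.g) c.g) := by
            simp only [mul_comm, mul_left_comm, mul_assoc]
        _ = _ := by rw [this]; simp only [mul_comm, mul_left_comm, mul_assoc]
    · exact mul_assoc a.g b.g c.g
  one := ⟨(f.1 1 1)⁻¹, 1⟩
  one_mul a := by
    apply Ext.ext
    · change (f.1 1 1)⁻¹ * a.s * f.1 1 a.g = a.s
      rw [one_left f.2 a.g]; simp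
    · exact one_mul a.g
  mul_one a := by
    apply Ext.ext
    · change a.s * (f.1 1 1)⁻¹ * f.1 a.g 1 = a.s
      rw [one_right f.2 a.g]; simp
    · exact mul_one a.g
  inv a := ⟨(f.1 1 1)⁻¹ * (f.1 a.g⁻¹ a.g)⁻¹ * a.s⁻¹, a.g⁻¹⟩
  inv_mul_cancel a := by
    apply Ext.ext
    · change (f.1 1 1)⁻¹ * (f.1 a.g⁻¹ a.g)⁻¹ * a.s⁻¹ * a.s * f.1 a.g⁻¹ a.g = (f.1 1 1)⁻¹
      simp
    · exact inv_mul_cancel a.g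
  mul_comm a b := by
    apply Ext.ext
    · change a.s * b.s * f.1 a.g b.g = b.s * a.s * f.1 b.g a.g
      rw [hs, mul_comm a.s]
    · exact mul_comm a.g b.g

noncomputable instance : DivisibleBy (Additive ℂˣ) ℤ :=
  letI : DivisibleBy (Additive ℂˣ) ℕ := by
    refine divisibleByOfSMulRightSurj _ _ ?_
    intro n hn a
    obtain ⟨z, hz⟩ := IsAlgClosed.exists_pow_nat_eq (a.toMul : ℂ) (Nat.pos_of_ne_zero hn)
    have hz0 : z ≠ 0 := by
      rintro rfl
      rw [zero_pow hn] at hz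
      exact a.toMul.ne_zero hz.symm
    refine ⟨Additive.ofMul (Units.mk0 z hz0), ?_⟩
    apply Additive.toMul.injective
    apply Units.ext
    simpa using hz
  AddGroup.divisibleByIntOfDivisibleByNat (Additive ℂˣ)

theorem symm_del (f : Z2 A) (hs : ∀ x y, f.1 x y = f.1 y x) : ∃ h : A → ℂˣ, del h = f.1 := by
  let _ := extGroup f hs
  have hmul : ∀ a b : Ext f, a * b = ⟨a.s * b.s * f.1 a.g b.g, a.g * b.g⟩ := fun _ _ => rfl
  let ι : ℂˣ →* Ext f := MonoidHom.mk' (fun a => ⟨a * (f.1 1 1)⁻¹, 1⟩) (by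
    intro a b
    rw [hmul]
    ext1
    · change a * b * (f.1 1 1)⁻¹ = a * (f.1 1 1)⁻¹ * (b * (f.1 1 1)⁻¹) * f.1 1 1
      simp [mul_assoc, mul_left_comm]
    · simp)
  have hι : Function.Injective ι := by
    intro a b h
    exact mul_right_cancel (congrArg Ext.s h)
  obtain ⟨r, hr⟩ := (Module.Baer.of_divisible (Additive ℂˣ)).extension_property_addMonoidHom
    (MonoidHom.toAdditive ι) hι (AddMonoidHom.id _)
  let r' : Ext f →* ℂˣ := MonoidHom.toAdditive.symm r
  have hr' : ∀ a, r' (ι a) = a := fun a => DFunLike.congr_fun hr (Additive.ofMul a)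
  refine ⟨fun x => r' ⟨1, x⟩, ?_⟩
  funext x y
  rw [del_apply, div_eq_iff_eq_mul, ← map_mul]
  conv_rhs => rw [← hr' (f.1 x y), ← map_mul]
  congr 1
  rw [hmul, hmul]
  ext1
  · change 1 * 1 * f.1 x y = f.1 x y * (f.1 1 1)⁻¹ * 1 * f.1 1 (x * y)
    rw [one_left f.2 (x * y)]; simp
  · change x * y = 1 * (x * y)
    simp
end symm

end SchurAux


namespace SchurAux
open scoped commutatorElement

section central
variable {G : Type} [Group G] (N : Subgroup G)

theorem symm_del_sub (hN : N ≤ Subgroup.center G) (f : Z2 G)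
    (ht : ∀ g : G, ∀ z ∈ N, theta f.1 g z = 1) :
    ∃ h : G → ℂˣ, ∀ x ∈ N, ∀ y ∈ N, del h x y = f.1 x y := by
  classical
  let _ : CommGroup N :=
    { (inferInstance : Group N) with
      mul_comm := fun a b => Subtype.ext (Subgroup.mem_center_iff.1 (hN b.2) a.1) }
  let f' : Z2 N := ⟨fun x y => f.1 x.1 y.1, fun x y z => f.2 x.1 y.1 z.1⟩
  obtain ⟨h, hh⟩ := symm_del f' (fun x y => by
    have := ht x.1 y.1 y.2
    exact div_eq_one.1 this)
  refine ⟨fun g => if hg : g ∈ N then h ⟨g, hg⟩ else 1, ?_⟩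
  intro x hx y hy
  have := congrFun (congrFun hh ⟨x, hx⟩) ⟨y, hy⟩
  rw [del_apply] at this ⊢
  rw [dif_pos hx, dif_pos hy, dif_pos (N.mul_mem hx hy)]
  exact this

variable [N.Normal]

theorem inflate_of_trivial (f : Z2 G) (hN : N ≤ Subgroup.center G)
    (h1 : ∀ g : G, ∀ z ∈ N, f.1 g z = 1) (h2 : ∀ g : G, ∀ z ∈ N, f.1 z g = 1) :
    ∃ f' : Z2 (G ⧸ N), ∀ x y : G, f'.1 x y = f.1 x y := by
  have hr : ∀ g g' : G, ∀ z ∈ N, f.1 g (g' * z) = f.1 g g' := by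
    intro g g' z hz
    have := f.2 g g' z
    rw [h1 _ z hz, h1 _ z hz] at this
    simpa using this.symm
  have hl : ∀ g g' : G, ∀ z ∈ N, f.1 (g * z) g' = f.1 g g' := by
    intro g g' z hz
    have := f.2 g z g'
    rw [h1 _ z hz, h2 _ z hz, ← Subgroup.mem_center_iff.1 (hN hz) g', hr _ _ _ hz] at this
    simpa using this
  let F : G ⧸ N → G ⧸ N → ℂˣ := fun a b => f.1 a.out b.out
  have hF : ∀ x y : G, F x y = f.1 x y := by
    intro x y
    obtain ⟨n, hn⟩ := QuotientGroup.mk_out_eq_mul N x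
    obtain ⟨m, hm⟩ := QuotientGroup.mk_out_eq_mul N y
    change f.1 (Quotient.out (x : G ⧸ N)) (Quotient.out (y : G ⧸ N)) = _
    rw [hn, hm, hr _ _ _ m.2, hl _ _ _ n.2]
  refine ⟨⟨F, ?_⟩, hF⟩
  intro a b c
  induction a using QuotientGroup.induction_on with | _ a => ?_
  induction b using QuotientGroup.induction_on with | _ b => ?_
  induction c using QuotientGroup.induction_on with | _ c => ?_
  rw [← QuotientGroup.mk_mul, ← QuotientGroup.mk_mul, hF, hF, hF, hF]
  exact f.2 a b c

theorem inflate_exists (hN : N ≤ Subgroup.center G) (f : Z2 G)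
    (ht : ∀ g : G, ∀ z ∈ N, theta f.1 g z = 1) :
    ∃ f' : Z2 (G ⧸ N), ∃ h : G → ℂˣ, ∀ x y : G, f.1 x y = f'.1 x y * del h x y := by
  classical
  obtain ⟨h0, hh0⟩ := symm_del_sub N hN f ht
  -- step 1
  let f1 : Z2 G := f * (⟨del h0, del_mem h0⟩ : Z2 G)⁻¹
  have hf1 : ∀ x y, f1.1 x y = f.1 x y * (del h0 x y)⁻¹ := fun _ _ => rfl
  have hf1N : ∀ x ∈ N, ∀ y ∈ N, f1.1 x y = 1 := by
    intro x hx y hy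
    rw [hf1, hh0 x hx y hy, mul_inv_cancel]
  have hf11 : f1.1 1 1 = 1 := hf1N 1 N.one_mem 1 N.one_mem
  -- section
  let s : G ⧸ N → G := fun q => if q = 1 then 1 else q.out
  have hs : ∀ g : G, (s g)⁻¹ * g ∈ N := by
    intro g
    by_cases hg : (g : G ⧸ N) = 1
    · simp only [s, if_pos hg, inv_one, one_mul]
      exact (QuotientGroup.eq_one_iff g).1 hg
    · simp only [s, if_neg hg]
      exact QuotientGroup.eq.1 (QuotientGroup.out_eq' _)
  let h : G → ℂˣ := fun g => f1.1 (s g) ((s g)⁻¹ * g)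
  have hhN : ∀ z ∈ N, h z = 1 := by
    intro z hz
    have : s (z : G ⧸ N) = 1 := if_pos ((QuotientGroup.eq_one_iff z).2 hz)
    simp only [h, this]
    rw [one_left f1.2, hf11]
  let f2 : Z2 G := f1 * ⟨del h, del_mem h⟩
  have hf2 : ∀ x y, f2.1 x y = f1.1 x y * del h x y := fun _ _ => rfl
  have hf2N : ∀ x ∈ N, ∀ y ∈ N, f2.1 x y = 1 := by
    intro x hx y hy
    rw [hf2, hf1N x hx y hy, del_apply, hhN x hx, hhN y hy, hhN _ (N.mul_mem hx hy)]
    simp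
  have hs2 : ∀ g : G, ∀ n ∈ N, s ((g * n : G) : G ⧸ N) = s (g : G ⧸ N) := by
    intro g n hn
    rw [QuotientGroup.mk_mul_of_mem g hn]
  have hss : ∀ g : G, s ((s (g : G ⧸ N) : G) : G ⧸ N) = s g := by
    intro g
    congr 1
    exact QuotientGroup.eq.2 (hs g)
  have hf2s : ∀ g : G, ∀ n ∈ N, f2.1 (s g) n = 1 := by
    intro g n hn
    have e1 : h (s g) = 1 := by
      simp only [h, hss, inv_mul_cancel]
      rw [one_right f1.2, hf11]
    have e2 : h (s (g : G ⧸ N) * n) = f1.1 (s g) n := by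
      simp only [h]
      rw [hs2 _ n hn, hss, inv_mul_cancel_left]
    rw [hf2, del_apply, e1, e2, hhN n hn]
    simp
  have A1 : ∀ g : G, ∀ z ∈ N, f2.1 g z = 1 := by
    intro g z hz
    have := f2.2 (s g) ((s g)⁻¹ * g) z
    rw [hf2s g _ (hs g), hf2s g _ (N.mul_mem (hs g) hz), hf2N _ (hs g) z hz,
      mul_inv_cancel_left] at this
    simpa using this
  have A2 : ∀ g : G, ∀ z ∈ N, f2.1 z g = 1 := by
    intro g z hz
    have hc := Subgroup.mem_center_iff.1 (hN hz) g
    have e : theta f2.1 g z = 1 := by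
      have : f2.1 = f.1 * (del h0⁻¹ * del h) := by
        rw [map_inv, ← mul_assoc]; rfl
      rw [this, theta_mul, theta_mul, theta_del _ hc, theta_del _ hc, ht g z hz]
      simp
    rw [← A1 g z hz]
    exact (div_eq_one.1 e).symm
  obtain ⟨f', hf'⟩ := inflate_of_trivial N f2 hN A1 A2
  refine ⟨f', h0 * h⁻¹, fun x y => ?_⟩
  rw [hf', hf2, hf1, map_mul, map_inv]
  simp only [Pi.mul_apply, Pi.inv_apply]
  rw [mul_assoc, mul_assoc, mul_left_comm (del h x y), mul_inv_cancel, mul_one, inv_mul_cancel,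
    mul_one]

/-- Inflation of cocycles. -/
def infZ : Z2 (G ⧸ N) →* Z2 G where
  toFun f := ⟨fun x y => f.1 x y, fun x y z => f.2 x y z⟩
  map_one' := rfl
  map_mul' _ _ := rfl

/-- Inflation on Schur multipliers. -/
def inf : M (G ⧸ N) →* M G := QuotientGroup.map _ _ (infZ N) (by
  intro f hf
  obtain ⟨h, hh⟩ := (mem_B2 f).1 hf
  rw [Subgroup.mem_comap, mem_B2]
  refine ⟨fun g => h g, ?_⟩
  funext x y
  exact congrFun (congrFun hh (x : G ⧸ N)) (y : G ⧸ N))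

/-- The pairing. -/
def beta (N : Subgroup G) (hN : N ≤ Subgroup.center G) : M G →* (G → N → ℂˣ) :=
  QuotientGroup.lift (B2 G)
    (MonoidHom.mk' (fun f g z => theta f.1 g z.1) (by
      intro a b; funext g z; exact theta_mul _ _ _ _)) (by
    intro f hf
    obtain ⟨h, hh⟩ := (mem_B2 f).1 hf
    funext g z
    change theta f.1 g z.1 = 1
    rw [← hh]
    exact theta_del h (Subgroup.mem_center_iff.1 (hN z.2) g))

theorem beta_mk (N : Subgroup G) (hN : N ≤ Subgroup.center G) (f : Z2 G) (g : G) (z : N) :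
    beta N hN (QuotientGroup.mk f) g z = theta f.1 g z.1 := rfl

theorem ker_beta_le (hN : N ≤ Subgroup.center G) : (beta N hN).ker ≤ (inf N).range := by
  intro x hx
  induction x using QuotientGroup.induction_on with | _ f => ?_
  obtain ⟨f', h, hh⟩ := inflate_exists N hN f (fun g z hz =>
    congrFun (congrFun (MonoidHom.mem_ker.1 hx) g) ⟨z, hz⟩)
  refine ⟨QuotientGroup.mk f', ?_⟩
  change QuotientGroup.mk (infZ N f') = _
  rw [QuotientGroup.eq, mem_B2]
  refine ⟨h, ?_⟩
  funext x y
  change _ = (f'.1 x y)⁻¹ * f.1 x y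
  rw [hh]; simp

/-- Transgression. -/
noncomputable def trZ (hN : N ≤ Subgroup.center G) (χ : N →* ℂˣ) : Z2 (G ⧸ N) :=
  ⟨fun a b => χ ⟨a.out * b.out * (a * b).out⁻¹, by
      rw [← QuotientGroup.eq_one_iff]; simp⟩, by
    intro a b c
    rw [← map_mul, ← map_mul]
    congr 1
    apply Subtype.ext
    simp only [Subgroup.coe_mul]
    have h1 : b.out * c.out * (b * c).out⁻¹ ∈ N := by
      rw [← QuotientGroup.eq_one_iff]; simp
    have h2 := Subgroup.mem_center_iff.1 (hN h1) a.out
    rw [mul_assoc a.out (b * c).out, ← mul_assoc (b.out * c.out * _) a.out, ← h2]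
    simp only [mul_assoc, inv_mul_cancel_left]⟩

theorem tr_inf (hN : N ≤ Subgroup.center G) (χ : N →* ℂˣ) :
    inf N (QuotientGroup.mk (trZ N hN χ)) = 1 := by
  change QuotientGroup.mk (infZ N _) = _
  rw [QuotientGroup.eq_one_iff, mem_B2]
  have key : ∀ x : G, Quotient.out (x : G ⧸ N) * x⁻¹ ∈ N := by
    intro x
    rw [← QuotientGroup.eq_one_iff]; simp
  refine ⟨fun x => χ ⟨_, key x⟩, ?_⟩
  funext x y
  rw [del_apply, ← map_mul, ← map_div]
  change _ = χ _
  congr 1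
  apply Subtype.ext
  change (Quotient.out (x : G ⧸ N) * x⁻¹) * (Quotient.out (y : G ⧸ N) * y⁻¹) /
    (Quotient.out ((x * y : G) : G ⧸ N) * (x * y)⁻¹) =
    Quotient.out (x : G ⧸ N) * Quotient.out (y : G ⧸ N) *
      (Quotient.out ((x : G ⧸ N) * (y : G ⧸ N)))⁻¹
  have h2 := Subgroup.mem_center_iff.1 (hN (key y)) (x⁻¹)
  rw [QuotientGroup.mk_mul, mul_assoc (Quotient.out (x : G ⧸ N)), h2]
  simp only [div_eq_mul_inv, mul_inv_rev, inv_inv, mul_assoc, inv_mul_cancel_left]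

theorem tr_injective (hN : N ≤ Subgroup.center G) (hc : N ≤ commutator G) :
    Function.Injective (fun χ : N →* ℂˣ => (QuotientGroup.mk (trZ N hN χ) : M (G ⧸ N))) := by
  intro χ ψ h
  obtain ⟨h, hh⟩ := (mem_B2 _).1 (QuotientGroup.eq.1 h)
  have hh' : ∀ a b, h a * h b / h (a * b) = ((trZ N hN χ).1 a b)⁻¹ * (trZ N hN ψ).1 a b :=
    fun a b => congrFun (congrFun hh a) b
  let ω : N →* ℂˣ := χ⁻¹ * ψ
  have key : ∀ x : G, x * (Quotient.out (x : G ⧸ N))⁻¹ ∈ N := by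
    intro x
    rw [← QuotientGroup.eq_one_iff]; simp
  have key2 : ∀ a b : G ⧸ N, a.out * b.out * (a * b).out⁻¹ ∈ N := by
    intro a b
    rw [← QuotientGroup.eq_one_iff]; simp
  have hω : ∀ a b, h a * h b / h (a * b) = ω ⟨_, key2 a b⟩ := hh'
  let φ : G →* ℂˣ := MonoidHom.mk' (fun x => ω ⟨_, key x⟩ * h x) (by
    intro x y
    have e : (⟨_, key (x * y)⟩ : N) = ⟨_, key x⟩ * ⟨_, key y⟩ * ⟨_, key2 x y⟩ := by
      apply Subtype.ext
      change x * y * (Quotient.out ((x * y : G) : G ⧸ N))⁻¹ =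
        (x * (Quotient.out (x : G ⧸ N))⁻¹) * (y * (Quotient.out (y : G ⧸ N))⁻¹) *
        (Quotient.out (x : G ⧸ N) * Quotient.out (y : G ⧸ N) *
      (Quotient.out ((x : G ⧸ N) * (y : G ⧸ N)))⁻¹)
      have h2 := Subgroup.mem_center_iff.1 (hN (key y)) (Quotient.out (x : G ⧸ N))⁻¹
      rw [QuotientGroup.mk_mul, mul_assoc x (Quotient.out (x : G ⧸ N))⁻¹, h2]
      simp only [mul_assoc, inv_mul_cancel_left]
    rw [e, map_mul, map_mul, ← hω, QuotientGroup.mk_mul]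
    simp only [div_eq_mul_inv, mul_assoc, inv_mul_cancel, mul_one]
    simp only [mul_left_comm])
  have hφ : ∀ x ∈ N, φ x = 1 := by
    intro x hx
    have : commutator G ≤ φ.ker := Abelianization.commutator_subset_ker φ
    exact this (hc hx)
  have hφ' : ∀ x : G, φ x = ω ⟨_, key x⟩ * h x := fun _ => rfl
  have hφ1 : ω ⟨_, key 1⟩ * h (1 : G) = 1 := map_one φ
  have : ω = 1 := by
    ext1 z
    have h1 := hφ z.1 z.2
    rw [hφ'] at h1
    have e0 : ((z : G) : G ⧸ N) = ((1 : G) : G ⧸ N) := by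
      rw [QuotientGroup.mk_one]; exact (QuotientGroup.eq_one_iff _).2 z.2
    have e : (⟨_, key z.1⟩ : N) = z * ⟨_, key 1⟩ := by
      apply Subtype.ext
      change z.1 * (Quotient.out ((z : G) : G ⧸ N))⁻¹ =
        z.1 * (1 * (Quotient.out ((1 : G) : G ⧸ N))⁻¹)
      rw [e0, one_mul]
    rw [e, map_mul, e0, mul_assoc, hφ1, mul_one] at h1
    exact h1
  exact (inv_mul_eq_one.1 this)

theorem card_step [Finite N] [Finite (M (G ⧸ N))] (hN : N ≤ Subgroup.center G)
    (hc : N ≤ commutator G)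
    (b : ℕ) (hfin : Finite (beta N hN).range) (hb : Nat.card (beta N hN).range ≤ b) :
    Finite (M G) ∧ Nat.card (M G) * Nat.card N ≤ Nat.card (M (G ⧸ N)) * b := by
  have hfr : Finite (inf N).range := Set.finite_range _
  have hfk : Finite (beta N hN).ker :=
    Finite.of_injective _ (Subgroup.inclusion_injective (ker_beta_le N hN))
  have hk : Nat.card (beta N hN).ker ≤ Nat.card (inf N).range :=
    Nat.card_le_card_of_injective _ (Subgroup.inclusion_injective (ker_beta_le N hN))
  have hM : Nat.card (M G) = Nat.card (beta N hN).ker * Nat.card (beta N hN).range := by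
    rw [← Subgroup.index_ker, Subgroup.card_mul_index]
  have hM' : Nat.card (M (G ⧸ N)) = Nat.card (inf N).ker * Nat.card (inf N).range := by
    rw [← Subgroup.index_ker, Subgroup.card_mul_index]
  have hfin : Finite (M G) := by
    apply Nat.finite_of_card_ne_zero
    rw [hM]
    exact mul_ne_zero Nat.card_pos.ne' Nat.card_pos.ne'
  refine ⟨hfin, ?_⟩
  have hker : Nat.card N ≤ Nat.card (inf N).ker := by
    let _ : CommGroup N :=
      { (inferInstance : Group N) with
        mul_comm := fun a b => Subtype.ext (Subgroup.mem_center_iff.1 (hN b.2) a.1) }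
    have hcard : Nat.card (N →* ℂˣ) = Nat.card N :=
      CommGroup.card_monoidHom_of_hasEnoughRootsOfUnity N ℂ
    rw [← hcard]
    refine Nat.card_le_card_of_injective
      (fun χ : N →* ℂˣ => (⟨QuotientGroup.mk (trZ N hN χ), tr_inf N hN χ⟩ : (inf N).ker)) ?_
    intro a b hab
    exact tr_injective N hN hc (congrArg Subtype.val hab)
  calc Nat.card (M G) * Nat.card N
      ≤ (Nat.card (inf N).range * b) * Nat.card (inf N).ker := by
        rw [hM]; gcongr
    _ = _ := by rw [hM']; ring

end central
end SchurAux


namespace SchurAux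
open scoped commutatorElement

section bounds
variable {G : Type} [Group G] (N : Subgroup G)

theorem exists_gen {p : ℕ} (hp : p.Prime) (hcard : Nat.card N = p) (c : G) (hcN : c ∈ N)
    (hc1 : c ≠ 1) : ∀ z ∈ N, ∃ n : ℕ, z = c ^ n := by
  have : Fact p.Prime := ⟨hp⟩
  have : Finite N := Nat.finite_of_card_ne_zero (by rw [hcard]; exact hp.ne_zero)
  intro z hz
  have h1 : (⟨c, hcN⟩ : N) ≠ 1 := fun h => hc1 (congrArg Subtype.val h)
  have := mem_powers_of_prime_card hcard h1 (g' := ⟨z, hz⟩)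
  obtain ⟨n, hn⟩ := this
  exact ⟨n, (congrArg Subtype.val hn).symm⟩

theorem pow_card_eq {p : ℕ} (hcard : Nat.card N = p) (c : G) (hcN : c ∈ N) : c ^ p = 1 := by
  have : (⟨c, hcN⟩ : N) ^ Nat.card N = 1 := pow_card_eq_one'
  rw [hcard] at this
  exact congrArg Subtype.val this

/-- General counting: if the pairing is determined by finitely many values then it is bounded. -/
theorem range_bound {p : ℕ} (hp : p.Prime) (hN : N ≤ Subgroup.center G) (hcard : Nat.card N = p)
    (c : G) (hcN : c ∈ N) (hc1 : c ≠ 1) {ι : Type} [Fintype ι] (g : ι → G)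
    (hdet : ∀ f1 f2 : Z2 G, (∀ i, theta f1.1 (g i) c = theta f2.1 (g i) c) →
      ∀ x, theta f1.1 x c = theta f2.1 x c) :
    Finite (beta N hN).range ∧ Nat.card (beta N hN).range ≤ p ^ Fintype.card ι := by
  have : NeZero p := ⟨hp.ne_zero⟩
  have hcen : ∀ x, x * c = c * x := Subgroup.mem_center_iff.1 (hN hcN)
  have hroot : ∀ φ : (beta N hN).range, ∀ i, φ.1 (g i) ⟨c, hcN⟩ ∈ rootsOfUnity p ℂ := by
    rintro ⟨_, ⟨x, rfl⟩⟩ i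
    induction x using QuotientGroup.induction_on with | _ f => ?_
    change theta f.1 (g i) c ^ p = 1
    rw [← theta_pow_right f (hcen _), pow_card_eq N hcard c hcN, theta_one_right]
  let F : (beta N hN).range → (ι → rootsOfUnity p ℂ) := fun φ i => ⟨_, hroot φ i⟩
  have hF : Function.Injective F := by
    rintro ⟨_, ⟨x, rfl⟩⟩ ⟨_, ⟨y, rfl⟩⟩ h
    induction x using QuotientGroup.induction_on with | _ f1 => ?_
    induction y using QuotientGroup.induction_on with | _ f2 => ?_
    have h1 := hdet f1 f2 (fun i => congrArg Subtype.val (congrFun h i))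
    apply Subtype.ext
    funext x z
    obtain ⟨z, hz⟩ := z
    obtain ⟨n, rfl⟩ := exists_gen N hp hcard c hcN hc1 z hz
    change theta f1.1 x (c ^ n) = theta f2.1 x (c ^ n)
    rw [theta_pow_right _ (hcen _), theta_pow_right _ (hcen _), h1]
  refine ⟨Finite.of_injective F hF, ?_⟩
  refine (Nat.card_le_card_of_injective F hF).trans ?_
  rw [Nat.card_fun, Complex.card_rootsOfUnity, Nat.card_eq_fintype_card]

theorem range_bound_rank [Finite G] {p : ℕ} (hp : p.Prime) (hN : N ≤ Subgroup.center G)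
    (hcard : Nat.card N = p) :
    Finite (beta N hN).range ∧ Nat.card (beta N hN).range ≤ p ^ Group.rank G := by
  obtain ⟨S, hS, hcl⟩ := Group.rank_spec G
  have hnt : Nontrivial N := by
    rw [← Finite.one_lt_card_iff_nontrivial, hcard]; exact hp.one_lt
  obtain ⟨⟨c, hcN⟩, hc⟩ := exists_ne (1 : N)
  have hc1 : c ≠ 1 := fun h => hc (Subtype.ext h)
  have := range_bound N hp hN hcard c hcN hc1 (ι := S) (fun s => s.1) (by
    intro f1 f2 h x
    have : thetaC f1 c (hN hcN) = thetaC f2 c (hN hcN) := by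
      refine MonoidHom.eq_of_eqOn_dense hcl ?_
      intro s hs
      exact h ⟨s, hs⟩
    exact DFunLike.congr_fun this x)
  rwa [Fintype.card_coe, hS] at this

theorem range_bound_two {p : ℕ} (hp : p.Prime) (hN : N ≤ Subgroup.center G)
    (hcard : Nat.card N = p) (hcomm : N = commutator G) :
    Finite (beta N hN).range ∧ Nat.card (beta N hN).range ≤ p ^ 2 := by
  have hmem : ∀ x y : G, ⁅x, y⁆ ∈ N := by
    intro x y
    rw [hcomm]
    exact Subgroup.commutator_mem_commutator (Subgroup.mem_top x) (Subgroup.mem_top y)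
  have hcen : ∀ x y w : G, w * ⁅x, y⁆ = ⁅x, y⁆ * w := fun x y =>
    Subgroup.mem_center_iff.1 (hN (hmem x y))
  obtain ⟨x, y, hxy⟩ : ∃ x y : G, ⁅x, y⁆ ≠ 1 := by
    by_contra hcon
    push Not at hcon
    have : N = ⊥ := by
      rw [hcomm, commutator_def, eq_bot_iff, Subgroup.commutator_le]
      intro a _ b _
      exact hcon a b
    rw [this, Subgroup.card_bot] at hcard
    exact hp.ne_one hcard.symm
  let ad : G → (G →* G) := fun w => MonoidHom.mk' (fun u => ⁅u, w⁆) (by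
    intro a b
    have h1 := hcen b w a
    calc ⁅a * b, w⁆ = a * ⁅b, w⁆ * (w * a⁻¹ * w⁻¹) := by
          simp [commutatorElement_def, mul_assoc]
      _ = ⁅b, w⁆ * ⁅a, w⁆ := by rw [h1]; simp [commutatorElement_def, mul_assoc]
      _ = _ := hcen _ _ _)
  have had : ∀ u w, ad w u = ⁅u, w⁆ := fun _ _ => rfl
  have := range_bound N hp hN hcard ⁅x, y⁆ (hmem x y) hxy (ι := Fin 2) ![x, y] (by
    intro f1 f2 h z
    have hx : theta f1.1 x ⁅x, y⁆ = theta f2.1 x ⁅x, y⁆ := h 0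
    have hy : theta f1.1 y ⁅x, y⁆ = theta f2.1 y ⁅x, y⁆ := h 1
    obtain ⟨i, hi⟩ := exists_gen N hp hcard _ (hmem x y) hxy ⁅z, x⁆ (hmem z x)
    obtain ⟨j, hj⟩ := exists_gen N hp hcard _ (hmem x y) hxy ⁅z, y⁆ (hmem z y)
    have hzx : (z * x ^ (-(j : ℤ)) * y ^ (i : ℤ)) * x = x * (z * x ^ (-(j : ℤ)) * y ^ (i : ℤ)) := by
      rw [← commutatorElement_eq_one_iff_mul_comm, ← had, map_mul, map_mul, map_zpow, map_zpow,
        had, had, had, hi, commutatorElement_self, ← commutatorElement_inv x y,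
        one_zpow, mul_one, zpow_natCast, inv_pow, mul_inv_cancel]
    have hzy : (z * x ^ (-(j : ℤ)) * y ^ (i : ℤ)) * y = y * (z * x ^ (-(j : ℤ)) * y ^ (i : ℤ)) := by
      rw [← commutatorElement_eq_one_iff_mul_comm, ← had, map_mul, map_mul, map_zpow, map_zpow,
        had, had, had, hj, commutatorElement_self]
      simp
    have key : ∀ f : Z2 G, theta f.1 z ⁅x, y⁆ * (theta f.1 x ⁅x, y⁆) ^ (-(j : ℤ)) *
        (theta f.1 y ⁅x, y⁆) ^ (i : ℤ) = 1 := by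
      intro f
      have h1 := theta_comm f hzx.symm hzy.symm
      rw [theta_swap, inv_eq_one] at h1
      have h2 : thetaC f ⁅x, y⁆ (hN (hmem x y)) (z * x ^ (-(j : ℤ)) * y ^ (i : ℤ)) = 1 := h1
      rw [map_mul, map_mul, map_zpow, map_zpow] at h2
      exact h2
    have k1 := key f1
    rw [← key f2, hx, hy] at k1
    exact mul_right_cancel (mul_right_cancel k1))
  rwa [Fintype.card_fin] at this

end bounds

section abelian

theorem prod_pairs {ι : Type} [Fintype ι] [LinearOrder ι] (n : ι → ℕ) (hn : ∀ i, 1 ≤ n i) :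
    (∏ i, ∏ j, (if i < j then Nat.gcd (n i) (n j) else 1)) ^ 2 ≤
      (∏ i, n i) ^ (Fintype.card ι - 1) := by
  have h1 : (∏ i, ∏ j, (if i < j then Nat.gcd (n i) (n j) else 1)) ^ 2 ≤
      ∏ i, ∏ j, ((if i < j then n i else 1) * (if i < j then n j else 1)) := by
    simp only [← Finset.prod_pow]
    refine Finset.prod_le_prod' fun i _ => Finset.prod_le_prod' fun j _ => ?_
    split_ifs
    · rw [sq]
      exact Nat.mul_le_mul (Nat.le_of_dvd (hn i) (Nat.gcd_dvd_left _ _))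
        (Nat.le_of_dvd (hn j) (Nat.gcd_dvd_right _ _))
    · simp
  refine h1.trans (le_of_eq ?_)
  simp only [Finset.prod_mul_distrib]
  have h2 : ∏ i, ∏ j, (if i < j then n j else 1) = ∏ i, ∏ j, (if j < i then n i else 1) :=
    Finset.prod_comm
  rw [h2, ← Finset.prod_mul_distrib, ← Finset.prod_pow]
  refine Finset.prod_congr rfl fun i _ => ?_
  rw [← Finset.prod_mul_distrib]
  have h3 : ∀ j, (if i < j then n i else 1) * (if j < i then n i else 1) =
      if j ≠ i then n i else 1 := by
    intro j
    rcases lt_trichotomy i j with h | h | h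
    · simp [h, h.not_gt, h.ne']
    · simp [h]
    · simp [h, h.not_gt, h.ne]
  simp only [h3]
  rw [Finset.prod_ite]
  rw [Finset.prod_const_one, mul_one, Finset.prod_const]
  congr 1
  rw [Finset.filter_ne', Finset.card_erase_of_mem (Finset.mem_univ i), Finset.card_univ]

theorem theta_ext {A : Type} [CommGroup A] {ι : Type} (e : ι → A)
    (he : Subgroup.closure (Set.range e) = ⊤) (f1 f2 : Z2 A)
    (h : ∀ i j, theta f1.1 (e i) (e j) = theta f2.1 (e i) (e j)) (x y : A) :
    theta f1.1 x y = theta f2.1 x y := by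
  have hc : ∀ z : A, z ∈ Subgroup.center A := fun z =>
    Subgroup.mem_center_iff.2 (fun g => mul_comm g z)
  have h1 : ∀ j x, theta f1.1 x (e j) = theta f2.1 x (e j) := by
    intro j x
    have : thetaC f1 (e j) (hc _) = thetaC f2 (e j) (hc _) := by
      refine MonoidHom.eq_of_eqOn_dense he ?_
      rintro _ ⟨i, rfl⟩
      exact h i j
    exact DFunLike.congr_fun this x
  have : thetaC f1 x (hc _) = thetaC f2 x (hc _) := by
    refine MonoidHom.eq_of_eqOn_dense he ?_
    rintro _ ⟨i, rfl⟩
    change theta f1.1 (e i) x = theta f2.1 (e i) x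
    rw [theta_swap, h1, ← theta_swap]
  have := DFunLike.congr_fun this y
  change theta f1.1 y x = theta f2.1 y x at this
  rw [theta_swap, this, ← theta_swap]

theorem abelian_card {A : Type} [CommGroup A] {ι : Type} [Fintype ι] [LinearOrder ι]
    (e : ι → A) (he : Subgroup.closure (Set.range e) = ⊤) (n : ι → ℕ) (hn : ∀ i, 1 ≤ n i)
    (hen : ∀ i, e i ^ n i = 1) :
    Finite (M A) ∧ Nat.card (M A) ≤ ∏ i, ∏ j, (if i < j then Nat.gcd (n i) (n j) else 1) := by
  have hN : (⊤ : Subgroup A) ≤ Subgroup.center A := fun z _ =>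
    Subgroup.mem_center_iff.2 (fun g => mul_comm g z)
  let b : M A → A → A → ℂˣ := fun x u v => beta ⊤ hN x u ⟨v, Subgroup.mem_top v⟩
  have hb : ∀ f : Z2 A, ∀ u v, b (QuotientGroup.mk f) u v = theta f.1 u v := fun _ _ _ => rfl
  let g : ι → ι → ℕ := fun i j => if i < j then Nat.gcd (n i) (n j) else 1
  have hg : ∀ i j, NeZero (g i j) := by
    intro i j
    constructor
    simp only [g]
    split_ifs
    · exact (Nat.gcd_pos_of_pos_left _ (hn i)).ne'
    · exact one_ne_zero
  have hroot : ∀ x i j, (if i < j then b x (e i) (e j) else 1) ∈ rootsOfUnity (g i j) ℂ := by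
    intro x i j
    induction x using QuotientGroup.induction_on with | _ f => ?_
    simp only [g, hb]
    split_ifs
    · rw [mem_rootsOfUnity, ← orderOf_dvd_iff_pow_eq_one]
      apply Nat.dvd_gcd
      · rw [orderOf_dvd_iff_pow_eq_one, ← theta_pow_left f (mul_comm _ _), hen, theta_one_left]
      · rw [orderOf_dvd_iff_pow_eq_one, ← theta_pow_right f (mul_comm _ _), hen, theta_one_right]
    · exact one_mem _
  let F : M A → (∀ i j, rootsOfUnity (g i j) ℂ) := fun x i j => ⟨_, hroot x i j⟩
  have hF : Function.Injective F := by
    intro x y h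
    induction x using QuotientGroup.induction_on with | _ f1 => ?_
    induction y using QuotientGroup.induction_on with | _ f2 => ?_
    have h0 : ∀ i j, i < j → theta f1.1 (e i) (e j) = theta f2.1 (e i) (e j) := by
      intro i j hij
      have : (if i < j then theta f1.1 (e i) (e j) else 1) =
        (if i < j then theta f2.1 (e i) (e j) else 1) :=
        congrArg Subtype.val (congrFun (congrFun h i) j)
      rwa [if_pos hij, if_pos hij] at this
    have h1 := theta_ext e he f1 f2 (by
      intro i j
      rcases lt_trichotomy i j with hij | hij | hij
      · exact h0 i j hij
      · subst hij; simp [theta]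
      · rw [theta_swap, h0 j i hij, ← theta_swap])
    rw [QuotientGroup.eq, mem_B2]
    apply symm_del
    intro u v
    have h2 : theta (f1⁻¹ * f2 : Z2 A).1 u v = 1 := by
      have h3 : (f2 : A → A → ℂˣ) = f1.1 * (f1⁻¹ * f2 : Z2 A).1 := by
        simp
      have h4 := h1 u v
      rw [h3, theta_mul] at h4
      exact (mul_eq_left.1 h4.symm)
    exact div_eq_one.1 h2
  refine ⟨Finite.of_injective F hF, ?_⟩
  refine (Nat.card_le_card_of_injective F hF).trans (le_of_eq ?_)
  rw [Nat.card_pi]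
  refine Finset.prod_congr rfl fun i _ => ?_
  rw [Nat.card_pi]
  refine Finset.prod_congr rfl fun j _ => ?_
  rw [Complex.card_rootsOfUnity]

theorem abelian_bound {A : Type} [CommGroup A] [Finite A] {p m d : ℕ} (hp : p.Prime)
    (hcard : Nat.card A = p ^ m) (hd : Group.rank A ≤ d + 1) :
    Finite (M A) ∧ Nat.card (M A) ^ 2 ≤ p ^ (m * d) := by
  obtain ⟨ι, _, n, hn, ⟨E⟩⟩ := CommGroup.equiv_prod_multiplicative_zmod_of_finite A
  have hnz : ∀ i, NeZero (n i) := fun i => ⟨by have := hn i; omega⟩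
  have hprod : ∏ i, n i = p ^ m := by
    rw [← hcard, Nat.card_congr E.toEquiv, Nat.card_pi]
    refine Finset.prod_congr rfl fun i _ => ?_
    exact (Nat.card_zmod (n i)).symm
  have hpd : ∀ i, p ∣ n i := by
    intro i
    have h1 : n i ∣ p ^ m := by rw [← hprod]; exact Finset.dvd_prod_of_mem _ (Finset.mem_univ i)
    obtain ⟨k, _, hk⟩ := (Nat.dvd_prime_pow hp).1 h1
    rw [hk]
    apply dvd_pow_self
    rintro rfl
    have := hn i
    rw [hk] at this
    simp at this
  have hrank : Fintype.card ι ≤ d + 1 := by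
    refine le_trans ?_ hd
    have : NeZero p := ⟨hp.ne_zero⟩
    let q : A →* (ι → Multiplicative (ZMod p)) :=
      (MonoidHom.mk' (fun (x : ∀ i, Multiplicative (ZMod (n i))) i =>
        Multiplicative.ofAdd (ZMod.castHom (hpd i) (ZMod p) (x i).toAdd)) (by
          intro a b; funext i
          change Multiplicative.ofAdd (ZMod.castHom (hpd i) (ZMod p) ((a i).toAdd + (b i).toAdd)) = _
          rw [map_add]; rfl)).comp E.toMonoidHom
    have hq : Function.Surjective q := by
      intro y
      choose x hx using fun i => ZMod.castHom_surjective (hpd i) (y i).toAdd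
      refine ⟨E.symm (fun i => Multiplicative.ofAdd (x i)), funext fun i => ?_⟩
      change Multiplicative.ofAdd (ZMod.castHom (hpd i) (ZMod p)
        (E (E.symm (fun i => Multiplicative.ofAdd (x i))) i).toAdd) = y i
      rw [E.apply_symm_apply]
      exact congrArg Multiplicative.ofAdd (hx i)
    refine le_trans ?_ (Group.rank_le_of_surjective q hq)
    have h1 := card_dvd_exponent_pow_rank' (ι → Multiplicative (ZMod p)) (n := p) (by
      intro g; funext i
      apply Multiplicative.toAdd.injective
      change p • (g i).toAdd = 0
      simp)
    rw [Nat.card_fun] at h1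
    have h2 : Nat.card (Multiplicative (ZMod p)) = p := Nat.card_zmod p
    rw [h2, Nat.card_eq_fintype_card, Nat.pow_dvd_pow_iff_le_right hp.one_lt] at h1
    exact h1
  classical
  let _ : LinearOrder ι := LinearOrder.lift' (Fintype.equivFin ι) (Fintype.equivFin ι).injective
  let e : ι → A := fun i => E.symm (Pi.mulSingle i (Multiplicative.ofAdd 1))
  have he : Subgroup.closure (Set.range e) = ⊤ := by
    rw [eq_top_iff]
    intro x _
    have h1 : x = ∏ i, E.symm (Pi.mulSingle i (E x i)) := by
      rw [← map_prod, Finset.univ_prod_mulSingle, E.symm_apply_apply]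
    rw [h1]
    refine Subgroup.prod_mem _ fun i _ => ?_
    have h2 : E x i = (Multiplicative.ofAdd (1 : ZMod (n i))) ^ ((E x i).toAdd.val) := by
      apply Multiplicative.toAdd.injective
      rw [toAdd_pow, toAdd_ofAdd]
      simp
    rw [h2, Pi.mulSingle_pow, map_pow]
    exact Subgroup.pow_mem _ (Subgroup.subset_closure (Set.mem_range_self i)) _
  obtain ⟨h1, h2⟩ := abelian_card e he n (fun i => (hn i).le) (by
    intro i
    simp only [e]
    rw [← map_pow, ← Pi.mulSingle_pow, ← ofAdd_nsmul]
    simp)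
  refine ⟨h1, ?_⟩
  calc Nat.card (M A) ^ 2 ≤ _ := Nat.pow_le_pow_left h2 2
    _ ≤ _ := prod_pairs n (fun i => (hn i).le)
    _ ≤ _ := by
      rw [hprod, ← pow_mul]
      apply Nat.pow_le_pow_right hp.pos
      apply Nat.mul_le_mul_left
      omega

end abelian
end SchurAux


namespace SchurAux
open scoped commutatorElement

theorem exists_central {G : Type} [Group G] [Finite G] {p n : ℕ} (hp : p.Prime)
    (hG : Nat.card G = p ^ n) (H : Subgroup G) [H.Normal] (hH : p ∣ Nat.card H) :
    ∃ N : Subgroup G, N ≤ Subgroup.center G ∧ N ≤ H ∧ Nat.card N = p := by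
  have : Fact p.Prime := ⟨hp⟩
  have hPG : IsPGroup p G := IsPGroup.of_card hG
  have hP : IsPGroup p (ConjAct G) := IsPGroup.of_equiv hPG ConjAct.toConjAct
  obtain ⟨b, hb, hb1⟩ := hP.exists_fixed_point_of_prime_dvd_card_of_fixed_point H hH
    (a := (1 : H)) (fun g => smul_one g)
  have hbc : (b : G) ∈ Subgroup.center G := by
    rw [Subgroup.mem_center_iff]
    intro g
    have h1 := congrArg Subtype.val (hb (ConjAct.toConjAct g))
    change g * b.1 * g⁻¹ = b.1 at h1
    exact mul_inv_eq_iff_eq_mul.1 h1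
  have hnt : Nontrivial (H ⊓ Subgroup.center G : Subgroup G) := by
    rw [Subgroup.nontrivial_iff_exists_ne_one]
    exact ⟨b, ⟨b.2, hbc⟩, fun h => hb1 (Subtype.ext h.symm)⟩
  have hdvd : p ∣ Nat.card (H ⊓ Subgroup.center G : Subgroup G) := by
    obtain ⟨m, hm, h⟩ := ((hPG.to_subgroup (H ⊓ Subgroup.center G)).nontrivial_iff_card).1 hnt
    rw [h]
    exact dvd_pow_self p hm.ne'
  obtain ⟨c, hc⟩ := exists_prime_orderOf_dvd_card' p hdvd
  refine ⟨Subgroup.zpowers c.1, ?_, ?_, ?_⟩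
  · rw [Subgroup.zpowers_le]; exact c.2.2
  · rw [Subgroup.zpowers_le]; exact c.2.1
  · rw [Nat.card_zpowers, Subgroup.orderOf_coe, hc]

theorem main {p e : ℕ} (hp : p.Prime) : ∀ (k n : ℕ) (G : Type) [Group G] [Finite G],
    Nat.card G = p ^ n → Nat.card (commutator G) = p ^ (k + 1) → Group.rank G ≤ e + 2 →
    Finite (M G) ∧ Nat.card (M G) ^ 2 * p ^ (2 * e) ≤ p ^ ((e + 1) * (n + k + 1)) := by
  intro k
  induction k with
  | zero =>
    intro n G _ _ hG hc hr
    obtain ⟨N, hN, hNc, hNp⟩ := exists_central hp hG (commutator G) (by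
      rw [hc]; exact dvd_pow_self p (by omega))
    have hNe : N = commutator G := by
      apply Subgroup.eq_of_le_of_card_ge hNc
      rw [hc, hNp]; simp
    have hnorm : N.Normal := by rw [hNe]; infer_instance
    obtain ⟨hf, hb⟩ := range_bound_two N hp hN hNp hNe
    have hcard : Nat.card (G ⧸ N) * p = p ^ n := by
      rw [← hG, ← hNp, ← Subgroup.card_eq_card_quotient_mul_card_subgroup]
    obtain ⟨n, rfl⟩ : ∃ m, n = m + 1 := by
      rcases n with _ | m
      · have := hp.one_lt
        have h2 : p ∣ 1 := ⟨Nat.card (G ⧸ N), by rw [mul_comm, hcard]; simp⟩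
        rw [Nat.dvd_one] at h2
        omega
      · exact ⟨m, rfl⟩
    have hcard' : Nat.card (G ⧸ N) = p ^ n := by
      rw [pow_succ] at hcard
      exact Nat.eq_of_mul_eq_mul_right hp.pos hcard
    have hrq : Group.rank (G ⧸ N) ≤ e + 2 :=
      (Group.rank_le_of_surjective (QuotientGroup.mk' N) (QuotientGroup.mk'_surjective N)).trans hr
    have habel : Finite (M (G ⧸ N)) ∧ Nat.card (M (G ⧸ N)) ^ 2 ≤ p ^ (n * (e + 1)) := by
      let _ : CommGroup (G ⧸ N) :=
        { (inferInstance : Group (G ⧸ N)) with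
          mul_comm := by
            intro a b
            induction a using QuotientGroup.induction_on with | _ a => ?_
            induction b using QuotientGroup.induction_on with | _ b => ?_
            have h1 : ⁅a, b⁆ ∈ N := by
              rw [hNe]
              exact Subgroup.commutator_mem_commutator (Subgroup.mem_top a) (Subgroup.mem_top b)
            have h2 := (QuotientGroup.eq_one_iff _).2 h1
            exact commutatorElement_eq_one_iff_mul_comm.1 h2 }
      exact abelian_bound hp hcard' hrq
    obtain ⟨hf1, hb1⟩ := habel
    obtain ⟨hf2, hb2⟩ := card_step N hN hNc _ hf hb
    refine ⟨hf2, ?_⟩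
    rw [hNp, pow_two, ← mul_assoc] at hb2
    have hb3 : Nat.card (M G) ≤ Nat.card (M (G ⧸ N)) * p :=
      Nat.le_of_mul_le_mul_right hb2 hp.pos
    calc Nat.card (M G) ^ 2 * p ^ (2 * e) ≤ (Nat.card (M (G ⧸ N)) * p) ^ 2 * p ^ (2 * e) := by
          gcongr
      _ = Nat.card (M (G ⧸ N)) ^ 2 * p ^ (2 * e + 2) := by ring
      _ ≤ p ^ (n * (e + 1)) * p ^ (2 * e + 2) := by gcongr
      _ = _ := by rw [← pow_add]; congr 1; ring
  | succ k ih =>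
    intro n G _ _ hG hc hr
    obtain ⟨N, hN, hNc, hNp⟩ := exists_central hp hG (commutator G) (by
      rw [hc]; exact dvd_pow_self p (by omega))
    have hnorm : N.Normal := ⟨fun z hz g => by
      rw [Subgroup.mem_center_iff.1 (hN hz) g, mul_inv_cancel_right]; exact hz⟩
    obtain ⟨hf, hb⟩ := range_bound_rank N hp hN hNp
    have hcard : Nat.card (G ⧸ N) * p = p ^ n := by
      rw [← hG, ← hNp, ← Subgroup.card_eq_card_quotient_mul_card_subgroup]
    obtain ⟨n, rfl⟩ : ∃ m, n = m + 1 := by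
      rcases n with _ | m
      · have := hp.one_lt
        have h2 : p ∣ 1 := ⟨Nat.card (G ⧸ N), by rw [mul_comm, hcard]; simp⟩
        rw [Nat.dvd_one] at h2
        omega
      · exact ⟨m, rfl⟩
    have hcard' : Nat.card (G ⧸ N) = p ^ n := by
      rw [pow_succ] at hcard
      exact Nat.eq_of_mul_eq_mul_right hp.pos hcard
    have hrq : Group.rank (G ⧸ N) ≤ e + 2 :=
      (Group.rank_le_of_surjective (QuotientGroup.mk' N) (QuotientGroup.mk'_surjective N)).trans hr
    have hcq : Nat.card (commutator (G ⧸ N)) = p ^ (k + 1) := by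
      have h1 : (commutator (G ⧸ N)) = (commutator G).map (QuotientGroup.mk' N) := by
        rw [commutator_def, commutator_def, Subgroup.map_commutator,
          Subgroup.map_top_of_surjective _ (QuotientGroup.mk'_surjective N)]
      have h2 : (commutator (G ⧸ N)).comap (QuotientGroup.mk' N) = commutator G := by
        rw [h1, Subgroup.comap_map_eq, QuotientGroup.ker_mk', sup_eq_left.2 hNc]
      have h3 : (commutator (G ⧸ N)).index = (commutator G).index := by
        rw [← h2, Subgroup.index_comap_of_surjective _ (QuotientGroup.mk'_surjective N)]
      have h4 := Subgroup.card_mul_index (commutator (G ⧸ N))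
      have h5 := Subgroup.card_mul_index (commutator G)
      rw [h3, hcard'] at h4
      rw [hc, hG] at h5
      have h6 : (commutator G).index ≠ 0 := Subgroup.FiniteIndex.index_ne_zero
      apply Nat.eq_of_mul_eq_mul_right (Nat.pos_of_ne_zero h6)
      apply Nat.eq_of_mul_eq_mul_right hp.pos
      rw [h4, ← pow_succ, ← h5]; ring
    obtain ⟨hf1, hb1⟩ := ih n (G ⧸ N) hcard' hcq hrq
    obtain ⟨hf2, hb2⟩ := card_step N hN hNc (p ^ (e + 2)) hf
      (hb.trans (Nat.pow_le_pow_right hp.pos hr))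
    refine ⟨hf2, ?_⟩
    rw [hNp, pow_succ p (e + 1), ← mul_assoc] at hb2
    have hb3 : Nat.card (M G) ≤ Nat.card (M (G ⧸ N)) * p ^ (e + 1) :=
      Nat.le_of_mul_le_mul_right hb2 hp.pos
    calc Nat.card (M G) ^ 2 * p ^ (2 * e)
        ≤ (Nat.card (M (G ⧸ N)) * p ^ (e + 1)) ^ 2 * p ^ (2 * e) := by gcongr
      _ = (Nat.card (M (G ⧸ N)) ^ 2 * p ^ (2 * e)) * p ^ (2 * (e + 1)) := by ring
      _ ≤ p ^ ((e + 1) * (n + k + 1)) * p ^ (2 * (e + 1)) := by gcongr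
      _ = _ := by rw [← pow_add]; congr 1; ring

theorem two_le_rank {G : Type} [Group G] [Finite G] (hna : ∃ a b : G, a * b ≠ b * a) :
    2 ≤ Group.rank G := by
  by_contra hlt
  obtain ⟨a, b, hab⟩ := hna
  apply hab
  obtain ⟨S, hS, hcl⟩ := Group.rank_spec G
  have hS1 : ∀ s ∈ S, ∀ t ∈ S, s = t := Finset.card_le_one.1 (by omega)
  have hcomm : ∀ s ∈ (S : Set G), ∀ t ∈ (S : Set G), s * t = t * s := by
    intro s hs t ht
    rw [hS1 s hs t ht]
  have ha : a ∈ Subgroup.closure (S : Set G) := by rw [hcl]; trivial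
  have hb : b ∈ Subgroup.closure (S : Set G) := by rw [hcl]; trivial
  let _ := Subgroup.closureCommGroupOfComm hcomm
  exact congrArg Subtype.val (mul_comm (⟨a, ha⟩ : Subgroup.closure (S : Set G)) ⟨b, hb⟩)

theorem comm_ne_bot {G : Type} [Group G] (hna : ∃ a b : G, a * b ≠ b * a) :
    commutator G ≠ ⊥ := by
  intro hk
  obtain ⟨a, b, hab⟩ := hna
  have h1 : ⁅a, b⁆ ∈ commutator G :=
    Subgroup.commutator_mem_commutator (Subgroup.mem_top a) (Subgroup.mem_top b)
  rw [hk, Subgroup.mem_bot] at h1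
  exact hab (commutatorElement_eq_one_iff_mul_comm.1 h1)

end SchurAux

/-- The bound derived in [Rai] from Ellis–Wiegold: for a non-abelian finite `p`-group of
order `p ^ n` with `|γ₂(G)| = p ^ k` and `d(G) = d`,
`|M(G)| ≤ p ^ ((d - 1) * (n + k) / 2 - (d - 2))`. -/
theorem schur_multiplier_bound_rai (p n k d : ℕ) (hp : p.Prime)
    (G : Type) [Group G] [Finite G]
    (hcard : Nat.card G = p ^ n)
    (hna : ∃ a b : G, a * b ≠ b * a)
    (hk : Nat.card (commutator G) = p ^ k)
    (hd : Group.rank G = d) :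
    (Nat.card (schurMultiplier G) : ℝ) ≤
      (p : ℝ) ^ (((d : ℝ) - 1) * ((n : ℝ) + (k : ℝ)) / 2 - ((d : ℝ) - 2)) := by
  have h2 := SchurAux.two_le_rank hna
  rw [hd] at h2
  obtain ⟨e, rfl⟩ : ∃ e, d = e + 2 := ⟨d - 2, by omega⟩
  obtain ⟨k, rfl⟩ : ∃ m, k = m + 1 := by
    rcases k with _ | m
    · exfalso
      rw [pow_zero, Subgroup.card_eq_one] at hk
      exact SchurAux.comm_ne_bot hna hk
    · exact ⟨m, rfl⟩
  obtain ⟨_, h⟩ := SchurAux.main (e := e) hp k n G hcard hk hd.le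
  rw [SchurAux.card_eq]
  have hp0 : (0 : ℝ) < p := by exact_mod_cast hp.pos
  have hR : ((Nat.card (SchurAux.M G) : ℝ)) ^ 2 * (p : ℝ) ^ (2 * e)
      ≤ (p : ℝ) ^ ((e + 1) * (n + k + 1)) := by exact_mod_cast h
  refine le_of_sq_le_sq ?_ (Real.rpow_pos_of_pos hp0 _).le
  refine le_of_mul_le_mul_right (hR.trans (le_of_eq ?_)) (pow_pos hp0 (2 * e))
  rw [← Real.rpow_natCast, ← Real.rpow_natCast, ← Real.rpow_natCast, ← Real.rpow_mul hp0.le,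
    ← Real.rpow_add hp0]
  congr 1
  push_cast
  ring
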